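/- arXiv:1402.5128 — 3 statements merged into one kernel-verified Lean document; each statement's English description precedes it below -/
import Mathlib

section
/- Let C be a nonempty bounded, closed and convex subset of a real Hilbert space H and let F : C × C → C be a weakly nonexpansive operator. Then F has at least one coupled fixed point in C of the form (x̄, x̄); that is, there exists x̄ ∈ C with F(x̄, x̄) = x̄. -/
/-!
The diagonal map `T x = F x x` is nonexpansive, so it suffices to find a fixed point of `T`.
Fix `u ∈ C`. For `p > 0` the contraction `x ↦ u + (1 + p)⁻¹ • (T x - u)` has a fixed point `x_p`,
which satisfies `T x_p - x_p = p • (x_p - u)`. For `q < p`, nonexpansiveness makes the angle at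
`x_p` in the triangle `u, x_p, x_q` right or obtuse, whence
`‖x_q - x_p‖² ≤ ‖x_q - u‖² - ‖x_p - u‖²`. Thus `‖x_p - u‖²` increases as `p ↓ 0`; being bounded,
it converges, so `x_p` is Cauchy and its limit is fixed by `T`.
-/

open Bornology Filter Function Set Topology
open scoped NNReal RealInnerProductSpace

theorem cauchySeq_of_dist_sq_le_sub {ι α : Type*} [Nonempty ι] [SemilatticeSup ι]
    [PseudoMetricSpace α] {x : ι → α} {φ : ι → ℝ} (hφ : BddAbove (range φ))
    (hx : ∀ m n, m ≤ n → dist (x m) (x n) ^ 2 ≤ φ n - φ m) : CauchySeq x := by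
  have hmono : Monotone φ := fun m n hmn ↦ sub_nonneg.1 <| (sq_nonneg _).trans (hx m n hmn)
  refine cauchySeq_of_le_tendsto_0' (fun m ↦ √((⨆ n, φ n) - φ m)) (fun m n hmn ↦ ?_) ?_
  · exact Real.le_sqrt_of_sq_le <| (hx m n hmn).trans <| sub_le_sub_right (le_ciSup hφ n) _
  · simpa using ((tendsto_atTop_ciSup hmono hφ).const_sub (⨆ n, φ n)).sqrt

section NormedSpace

variable {E : Type*} [NormedAddCommGroup E] [NormedSpace ℝ E] {C : Set E} {T : E → E}

theorem exists_mem_sub_eq_smul_sub (hC : IsComplete C) (hconv : Convex ℝ C)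
    (hmaps : MapsTo T C C) {K : ℝ≥0} (hT : LipschitzOnWith K T C) {u : E} (hu : u ∈ C)
    {p : ℝ} (hp : 0 ≤ p) (hK : K < 1 + p) : ∃ x ∈ C, T x - x = p • (x - u) := by
  lift p to ℝ≥0 using hp
  have hK' : K < 1 + p := mod_cast hK
  set t : ℝ≥0 := (1 + p)⁻¹
  let g : E → E := fun x ↦ u + (t : ℝ) • (T x - u)
  have hg_maps : MapsTo g C C := fun x hx ↦
    hconv.add_smul_sub_mem hu (hmaps hx) ⟨t.2, mod_cast inv_le_one_of_one_le₀ (by simp)⟩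
  have hg_lip : LipschitzOnWith (t * K) g C := .of_dist_le_mul fun x hx y hy ↦ by
    calc dist (g x) (g y) = t * dist (T x) (T y) := by
          simp only [g, dist_add_left, dist_smul₀, dist_sub_right, NNReal.norm_eq]
      _ ≤ t * (K * dist x y) := by gcongr; exact hT.dist_le_mul x hx y hy
      _ = (t * K : ℝ≥0) * dist x y := by push_cast; ring
  have hg_contracting : ContractingWith (t * K) (hg_maps.restrict g C C) :=
    ⟨by simpa only [t, inv_mul_lt_iff₀ (show 0 < 1 + p by positivity), mul_one],
      hg_lip.mapsToRestrict hg_maps⟩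
  obtain ⟨x, hxC, hx, -⟩ :=
    hg_contracting.exists_fixedPoint' hC hg_maps hu (edist_ne_top _ _)
  have hx_sub : T x - u = (1 + p : ℝ) • (x - u) := by
    rw [← inv_smul_eq_iff₀ (by positivity), eq_sub_iff_add_eq']
    exact hx
  refine ⟨x, hxC, ?_⟩
  rw [← sub_sub_sub_cancel_right _ _ u, hx_sub, add_smul, one_smul, add_sub_cancel_left]

theorem norm_sub_le_norm_sub_of_sub_eq_smul_sub {x y u : E} {p : ℝ} (hp : 0 ≤ p)
    (h : y - x = p • (x - u)) : ‖x - u‖ ≤ ‖y - u‖ := by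
  have hy : y - u = (1 + p) • (x - u) := by
    rw [add_smul, one_smul, ← h, sub_add_sub_cancel']
  rw [hy, norm_smul, Real.norm_of_nonneg (by positivity)]
  exact le_mul_of_one_le_left (norm_nonneg _) (by linarith)

end NormedSpace

section InnerProductSpace

variable {E : Type*} [NormedAddCommGroup E] [InnerProductSpace ℝ E]

theorem inner_nonpos_of_norm_add_le {v d : E} (h : ‖v + d‖ ≤ ‖v‖) : ⟪v, d⟫ ≤ 0 := by
  have hsq : ‖v + d‖ ^ 2 ≤ ‖v‖ ^ 2 := by gcongr
  rw [norm_add_sq_real] at hsq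
  linarith [sq_nonneg ‖d‖]

theorem norm_sub_sq_le_of_inner_smul_sub_smul_nonpos {y w : E} {p q : ℝ} (hq : 0 ≤ q)
    (hqp : q < p) (h : ⟪y - w, q • y - p • w⟫ ≤ 0) : ‖y - w‖ ^ 2 ≤ ‖y‖ ^ 2 - ‖w‖ ^ 2 := by
  have hinner : ⟪y - w, q • y - p • w⟫ = q * ‖y - w‖ ^ 2 - (p - q) * ⟪w, y - w⟫ := by
    rw [show q • y - p • w = q • (y - w) - (p - q) • w by module, inner_sub_right,
      real_inner_smul_right, real_inner_smul_right, real_inner_self_eq_norm_sq,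
      real_inner_comm]
  have hangle : 0 ≤ ⟪w, y - w⟫ := by
    refine nonneg_of_mul_nonneg_right ?_ (sub_pos.2 hqp)
    linarith [mul_nonneg hq (sq_nonneg ‖y - w‖)]
  have hexpand := norm_add_sq_real w (y - w)
  rw [add_sub_cancel] at hexpand
  linarith

variable {C : Set E} {T : E → E}

theorem norm_sub_sq_le_of_sub_eq_smul_sub {x y u : E} (hT : ‖T x - T y‖ ≤ ‖x - y‖)
    {p q : ℝ} (hq : 0 ≤ q) (hqp : q < p) (hx : T x - x = q • (x - u))
    (hy : T y - y = p • (y - u)) : ‖x - y‖ ^ 2 ≤ ‖x - u‖ ^ 2 - ‖y - u‖ ^ 2 := by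
  have hT_sub : T x - T y = (x - y) + (q • (x - u) - p • (y - u)) := by
    rw [← hx, ← hy]
    abel
  have hinner : ⟪x - y, q • (x - u) - p • (y - u)⟫ ≤ 0 :=
    inner_nonpos_of_norm_add_le (hT_sub ▸ hT)
  rw [← sub_sub_sub_cancel_right x y u] at hinner ⊢
  exact norm_sub_sq_le_of_inner_smul_sub_smul_nonpos hq hqp hinner

theorem cauchySeq_of_sub_eq_smul_sub (hT : LipschitzOnWith 1 T C) (hbdd : IsBounded (T '' C))
    {u : E} {p : ℕ → ℝ} (hp : ∀ n, 0 ≤ p n) (hp_anti : StrictAnti p) {x : ℕ → E}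
    (hxC : ∀ n, x n ∈ C) (hx : ∀ n, T (x n) - x n = p n • (x n - u)) : CauchySeq x := by
  refine cauchySeq_of_dist_sq_le_sub (φ := fun n ↦ ‖x n - u‖ ^ 2) ?_ fun m n hmn ↦ ?_
  · obtain ⟨R, hR⟩ := hbdd.subset_closedBall u
    refine ⟨R ^ 2, forall_mem_range.2 fun n ↦ ?_⟩
    have hTx : ‖T (x n) - u‖ ≤ R := mem_closedBall_iff_norm.1 (hR (mem_image_of_mem T (hxC n)))
    have hxR := (norm_sub_le_norm_sub_of_sub_eq_smul_sub (hp n) (hx n)).trans hTx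
    gcongr
  · rcases hmn.eq_or_lt with rfl | hlt
    · simp
    · rw [dist_comm, dist_eq_norm]
      refine norm_sub_sq_le_of_sub_eq_smul_sub ?_ (hp n) (hp_anti hlt) (hx n) (hx m)
      simpa using hT.norm_sub_le (hxC n) (hxC m)

theorem exists_mem_isFixedPt_of_lipschitzOnWith_one (hne : C.Nonempty) (hC : IsComplete C)
    (hconv : Convex ℝ C) (hmaps : MapsTo T C C) (hT : LipschitzOnWith 1 T C)
    (hbdd : IsBounded (T '' C)) : ∃ x ∈ C, IsFixedPt T x := by
  obtain ⟨u, hu⟩ := hne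
  obtain ⟨p, hp_anti, hp_pos, hp_lim⟩ := exists_seq_strictAnti_tendsto (0 : ℝ)
  choose x hxC hx using fun n ↦
    exists_mem_sub_eq_smul_sub hC hconv hmaps hT hu (hp_pos n).le (by simpa using hp_pos n)
  have hx_cauchy : CauchySeq x :=
    cauchySeq_of_sub_eq_smul_sub hT hbdd (fun n ↦ (hp_pos n).le) hp_anti hxC hx
  obtain ⟨z, hzC, hxz⟩ := cauchySeq_tendsto_of_isComplete hC hxC hx_cauchy
  have hTxz : Tendsto (fun n ↦ T (x n)) atTop (𝓝 (T z)) :=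
    (hT.continuousOn z hzC).tendsto.comp
      (tendsto_nhdsWithin_iff.2 ⟨hxz, .of_forall hxC⟩)
  have hresidual : Tendsto (fun n ↦ T (x n) - x n) atTop (𝓝 0) := by
    simpa only [hx, zero_smul] using hp_lim.smul (hxz.sub_const u)
  exact ⟨z, hzC, sub_eq_zero.1 <| tendsto_nhds_unique (hTxz.sub hxz) hresidual⟩

end InnerProductSpace

/-- Weak nonexpansiveness of a mapping `F : C × C → G`, the condition that makes its diagonal
nonexpansive. `F` is encoded as a curried function on the whole space whose values outside `C` are
irrelevant. -/
def WeaklyNonexpansiveOn {E G : Type*} [SeminormedAddCommGroup E] [SeminormedAddCommGroup G]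
    (F : E → E → G) (C : Set E) : Prop :=
  ∃ a b : ℝ, 0 ≤ a ∧ 0 ≤ b ∧ a + b ≤ 1 ∧ ∀ x ∈ C, ∀ y ∈ C, ∀ u ∈ C, ∀ v ∈ C,
    ‖F x y - F u v‖ ≤ a * ‖x - u‖ + b * ‖y - v‖

theorem WeaklyNonexpansiveOn.lipschitzOnWith_diag {E G : Type*} [SeminormedAddCommGroup E]
    [SeminormedAddCommGroup G] {F : E → E → G} {C : Set E} (hF : WeaklyNonexpansiveOn F C) :
    LipschitzOnWith 1 (fun x ↦ F x x) C := by
  obtain ⟨a, b, -, -, hab, hF⟩ := hF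
  refine lipschitzOnWith_iff_norm_sub_le.2 fun x hx y hy ↦ ?_
  calc ‖F x x - F y y‖ ≤ a * ‖x - y‖ + b * ‖x - y‖ := hF x hx x hx y hy y hy
    _ = (a + b) * ‖x - y‖ := by ring
    _ ≤ 1 * ‖x - y‖ := by gcongr

theorem exists_diagonal_coupled_fixed_point_general {E : Type*} [NormedAddCommGroup E]
    [InnerProductSpace ℝ E] {C : Set E} (hne : C.Nonempty) (hC : IsComplete C)
    (hconv : Convex ℝ C) {F : E → E → E} (hmaps : MapsTo (fun x ↦ F x x) C C)
    (hbdd : IsBounded ((fun x ↦ F x x) '' C)) (hF : WeaklyNonexpansiveOn F C) :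
    ∃ x ∈ C, F x x = x :=
  exists_mem_isFixedPt_of_lipschitzOnWith_one hne hC hconv hmaps hF.lipschitzOnWith_diag hbdd

/-- A weakly nonexpansive self-map `F : C × C → C` of a nonempty bounded
closed convex subset of a real Hilbert space has a coupled fixed point of the form `(x̄, x̄)`. -/
theorem exists_diagonal_coupled_fixed_point
    {H : Type*} [NormedAddCommGroup H] [InnerProductSpace ℝ H] [CompleteSpace H]
    (C : Set H) (hne : C.Nonempty) (hbdd : Bornology.IsBounded C)
    (hcl : IsClosed C) (hconv : Convex ℝ C)
    (F : H → H → H) (hmaps : ∀ x ∈ C, ∀ y ∈ C, F x y ∈ C)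
    (a b : ℝ) (ha : 0 ≤ a) (hb : 0 ≤ b) (hab : a + b ≤ 1)
    (hF : ∀ x ∈ C, ∀ y ∈ C, ∀ u ∈ C, ∀ v ∈ C,
      ‖F x y - F u v‖ ≤ a * ‖x - u‖ + b * ‖y - v‖) :
    ∃ x ∈ C, F x x = x :=
  have hdiag : MapsTo (fun x ↦ F x x) C C := fun x hx ↦ hmaps x hx x hx
  exists_diagonal_coupled_fixed_point_general hne hcl.isComplete hconv hdiag
    (hbdd.subset hdiag.image_subset) ⟨a, b, ha, hb, hab, hF⟩
end

section
/- Let C be a nonempty bounded, closed and convex subset of a real Hilbert space H, let F : C × C → C be weakly nonexpansive, let λ ∈ (0,1), and let the sequence (xₙ) in C be given by x₀ ∈ C and xₙ₊₁ = λxₙ + (1−λ)F(xₙ, xₙ). Then xₙ − F(xₙ, xₙ) → 0 strongly as n → ∞. -/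
open Filter Topology

/-!
Put `T u = F u u`, a nonexpansive self-map of `C`, and let `dₙ = ‖xₙ - T xₙ‖`. Along the iteration
`dₙ` decreases to some limit `r`. The Goebel–Kirk inequality
`(1 + n (1 - l)) dᵢ ≤ ‖T xᵢ₊ₙ - xᵢ‖ + l⁻ⁿ (dᵢ - dᵢ₊ₙ)` becomes `(1 + n (1 - l)) r ≤ B` as `i → ∞`,
where `B` bounds the distances `‖T xᵢ₊ₙ - xᵢ‖`. Since `n` is arbitrary, `r = 0`.
-/

theorem pow_mul_one_add_mul_one_sub_le_one {l : ℝ} (hl0 : 0 ≤ l) (hl1 : l ≤ 1) (n : ℕ) :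
    l ^ n * (1 + n * (1 - l)) ≤ 1 :=
  calc l ^ n * (1 + n * (1 - l))
      ≤ l ^ n * (1 + (1 - l)) ^ n := by
        gcongr
        exact one_add_mul_le_pow (by linarith) n
    _ = (1 - (1 - l) ^ 2) ^ n := by rw [← mul_pow]; ring
    _ ≤ 1 := pow_le_one₀ (by nlinarith) (by nlinarith)

theorem nonpos_of_forall_one_add_nat_mul_mul_le {t r B : ℝ} (ht : 0 < t)
    (h : ∀ n : ℕ, (1 + n * t) * r ≤ B) : r ≤ 0 := by
  by_contra! hr
  obtain ⟨n, hn⟩ := exists_nat_gt (B / (t * r))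
  have : B < n * (t * r) := (div_lt_iff₀ (by positivity)).1 hn
  linarith [h n]

section Iteration

variable {E : Type*} [SeminormedAddCommGroup E] [NormedSpace ℝ E] {l : ℝ} {x y : ℕ → E}

/-- The pair of sequences `(x, y)` is a Krasnoselskij iteration with parameter `l`: each `x (n + 1)`
is the average of `x n` and `y n` with weights `l` and `1 - l`, and `y` moves no faster than `x`.
The model case is `y n = T (x n)` for a nonexpansive map `T`, which enters the convergence
argument only through these two properties. -/
structure IsKrasnoselskijIteration (l : ℝ) (x y : ℕ → E) : Prop where
  succ_eq : ∀ n, x (n + 1) = l • x n + (1 - l) • y n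
  norm_succ_sub_le : ∀ n, ‖y (n + 1) - y n‖ ≤ ‖x (n + 1) - x n‖

namespace IsKrasnoselskijIteration

theorem norm_succ_sub_le_residual (h : IsKrasnoselskijIteration l x y) (hl1 : l ≤ 1) (n : ℕ) :
    ‖y (n + 1) - y n‖ ≤ (1 - l) * ‖x n - y n‖ :=
  calc ‖y (n + 1) - y n‖
      ≤ ‖x (n + 1) - x n‖ := h.norm_succ_sub_le n
    _ = ‖(1 - l) • (y n - x n)‖ := by rw [h.succ_eq]; congr 1; module
    _ = (1 - l) * ‖x n - y n‖ := by
        rw [norm_smul, Real.norm_of_nonneg (sub_nonneg.2 hl1), norm_sub_rev]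

theorem antitone_residual (h : IsKrasnoselskijIteration l x y) (hl0 : 0 ≤ l) (hl1 : l ≤ 1) :
    Antitone fun n => ‖x n - y n‖ := by
  refine antitone_nat_of_succ_le fun n => ?_
  calc ‖x (n + 1) - y (n + 1)‖
      = ‖l • (x n - y n) - (y (n + 1) - y n)‖ := by rw [h.succ_eq]; congr 1; module
    _ ≤ ‖l • (x n - y n)‖ + ‖y (n + 1) - y n‖ := norm_sub_le _ _
    _ ≤ l * ‖x n - y n‖ + (1 - l) * ‖x n - y n‖ := by
        rw [norm_smul, Real.norm_of_nonneg hl0]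
        gcongr
        exact h.norm_succ_sub_le_residual hl1 n
    _ = ‖x n - y n‖ := by ring

theorem norm_add_sub_le_mul_residual (h : IsKrasnoselskijIteration l x y) (hl0 : 0 ≤ l)
    (hl1 : l ≤ 1) (i n : ℕ) : ‖y (i + n) - y i‖ ≤ n * ((1 - l) * ‖x i - y i‖) := by
  have step (k : ℕ) : dist (y (i + k)) (y (i + (k + 1))) ≤ (1 - l) * ‖x i - y i‖ := by
    rw [dist_comm, dist_eq_norm]
    exact (h.norm_succ_sub_le_residual hl1 (i + k)).trans <|
      mul_le_mul_of_nonneg_left (h.antitone_residual hl0 hl1 (Nat.le_add_right i k))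
        (sub_nonneg.2 hl1)
  have telescope := dist_le_range_sum_of_dist_le (f := fun k => y (i + k)) n fun {k} _ => step k
  simpa [dist_eq_norm, norm_sub_rev] using telescope

theorem norm_add_succ_sub_succ_le (h : IsKrasnoselskijIteration l x y) (hl0 : 0 ≤ l)
    (hl1 : l ≤ 1) (i n : ℕ) :
    ‖y (i + n) - x (i + 1)‖ ≤ l * ‖y (i + n) - x i‖ + n * (1 - l) ^ 2 * ‖x i - y i‖ := by
  have hl1' : 0 ≤ 1 - l := sub_nonneg.2 hl1
  calc ‖y (i + n) - x (i + 1)‖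
      = ‖l • (y (i + n) - x i) + (1 - l) • (y (i + n) - y i)‖ := by
        rw [h.succ_eq]; congr 1; module
    _ ≤ l * ‖y (i + n) - x i‖ + (1 - l) * ‖y (i + n) - y i‖ := by
        refine (norm_add_le _ _).trans_eq ?_
        rw [norm_smul, norm_smul, Real.norm_of_nonneg hl0, Real.norm_of_nonneg hl1']
    _ ≤ l * ‖y (i + n) - x i‖ + (1 - l) * (n * ((1 - l) * ‖x i - y i‖)) := by
        gcongr
        exact h.norm_add_sub_le_mul_residual hl0 hl1 i n
    _ = l * ‖y (i + n) - x i‖ + n * (1 - l) ^ 2 * ‖x i - y i‖ := by ring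

-- Multiplying through by `l ^ n` keeps the induction free of division.
theorem goebel_kirk_inequality (h : IsKrasnoselskijIteration l x y) (hl0 : 0 ≤ l) (hl1 : l ≤ 1)
    (i n : ℕ) :
    l ^ n * (1 + n * (1 - l)) * ‖x i - y i‖ ≤
      l ^ n * ‖y (i + n) - x i‖ + (‖x i - y i‖ - ‖x (i + n) - y (i + n)‖) := by
  induction n generalizing i with
  | zero => simp [norm_sub_rev]
  | succ n ih =>
    have ih_succ := ih (i + 1)
    rw [Nat.succ_add_eq_add_succ] at ih_succ
    have decrease : (1 - l ^ n * (1 + n * (1 - l))) * ‖x (i + 1) - y (i + 1)‖ ≤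
        (1 - l ^ n * (1 + n * (1 - l))) * ‖x i - y i‖ :=
      mul_le_mul_of_nonneg_left (h.antitone_residual hl0 hl1 i.le_succ)
        (sub_nonneg.2 (pow_mul_one_add_mul_one_sub_le_one hl0 hl1 n))
    have shift := mul_le_mul_of_nonneg_left (h.norm_add_succ_sub_succ_le hl0 hl1 i (n + 1))
      (pow_nonneg hl0 n)
    push_cast at shift ⊢
    linear_combination ih_succ + decrease + shift

theorem exists_norm_sub_le (h : IsKrasnoselskijIteration l x y) (hl0 : 0 ≤ l) (hl1 : l ≤ 1)
    (hx : Bornology.IsBounded (Set.range x)) : ∃ B, ∀ m n, ‖y m - x n‖ ≤ B := by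
  obtain ⟨D, hD⟩ := Metric.isBounded_range_iff.1 hx
  refine ⟨‖x 0 - y 0‖ + D, fun m n => ?_⟩
  calc ‖y m - x n‖
      ≤ ‖y m - x m‖ + ‖x m - x n‖ := norm_sub_le_norm_sub_add_norm_sub ..
    _ ≤ ‖x 0 - y 0‖ + D := by
        rw [norm_sub_rev, ← dist_eq_norm (x m) (x n)]
        exact add_le_add (h.antitone_residual hl0 hl1 m.zero_le) (hD m n)

theorem tendsto_sub_zero (h : IsKrasnoselskijIteration l x y) (hl0 : 0 < l) (hl1 : l < 1)
    (hx : Bornology.IsBounded (Set.range x)) : Tendsto (fun n => x n - y n) atTop (𝓝 0) := by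
  obtain ⟨B, hB⟩ := h.exists_norm_sub_le hl0.le hl1.le hx
  obtain ⟨r, hr⟩ : ∃ r, Tendsto (fun n => ‖x n - y n‖) atTop (𝓝 r) :=
    ⟨_, tendsto_atTop_ciInf (h.antitone_residual hl0.le hl1.le)
      ⟨0, Set.forall_mem_range.2 fun _ => norm_nonneg _⟩⟩
  have limit_bound (n : ℕ) : (1 + n * (1 - l)) * r ≤ B := by
    have scaled : l ^ n * (1 + n * (1 - l)) * r ≤ l ^ n * B + (r - r) :=
      le_of_tendsto_of_tendsto' (hr.const_mul _)
        ((hr.sub (hr.comp (tendsto_add_atTop_nat n))).const_add _) fun i =>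
          (h.goebel_kirk_inequality hl0.le hl1.le i n).trans <| by
            gcongr
            · exact hB _ _
            · rfl
    rw [sub_self, add_zero, mul_assoc] at scaled
    exact le_of_mul_le_mul_left scaled (pow_pos hl0 n)
  have r_eq_zero : r = 0 :=
    (nonpos_of_forall_one_add_nat_mul_mul_le (sub_pos.2 hl1) limit_bound).antisymm
      (ge_of_tendsto' hr fun _ => norm_nonneg _)
  rw [tendsto_zero_iff_norm_tendsto_zero]
  exact r_eq_zero ▸ hr

end IsKrasnoselskijIteration

variable {C : Set E} {T : E → E}

theorem krasnoselskij_iterate_mem (hC : Convex ℝ C) (hT : Set.MapsTo T C C) (hl0 : 0 ≤ l)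
    (hl1 : l ≤ 1) (hx0 : x 0 ∈ C) (hrec : ∀ n, x (n + 1) = l • x n + (1 - l) • T (x n)) (n : ℕ) :
    x n ∈ C := by
  induction n with
  | zero => exact hx0
  | succ n ih =>
    rw [hrec]
    exact hC ih (hT ih) hl0 (sub_nonneg.2 hl1) (add_sub_cancel _ _)

theorem krasnoselskij_asymptotic_regularity_general (hT : LipschitzOnWith 1 T C) (hl0 : 0 < l)
    (hl1 : l < 1) (hxC : ∀ n, x n ∈ C) (hx : Bornology.IsBounded (Set.range x))
    (hrec : ∀ n, x (n + 1) = l • x n + (1 - l) • T (x n)) :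
    Tendsto (fun n => x n - T (x n)) atTop (𝓝 0) :=
  have iteration : IsKrasnoselskijIteration l x (fun n => T (x n)) :=
    ⟨hrec, fun n => by simpa using hT.norm_sub_le (hxC (n + 1)) (hxC n)⟩
  iteration.tendsto_sub_zero hl0 hl1 hx

end Iteration

theorem lipschitzOnWith_one_diagonal {E : Type*} [SeminormedAddCommGroup E] {C : Set E}
    {F : E → E → E} {a b : ℝ} (hab : a + b ≤ 1)
    (hF : ∀ x ∈ C, ∀ y ∈ C, ∀ u ∈ C, ∀ v ∈ C, ‖F x y - F u v‖ ≤ a * ‖x - u‖ + b * ‖y - v‖) :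
    LipschitzOnWith 1 (fun x => F x x) C :=
  LipschitzOnWith.of_dist_le_mul fun x hx u hu => by
    rw [dist_eq_norm, dist_eq_norm]
    calc ‖F x x - F u u‖
        ≤ (a + b) * ‖x - u‖ := (hF x hx x hx u hu u hu).trans_eq (add_mul ..).symm
      _ ≤ 1 * ‖x - u‖ := by gcongr

/-- For a weakly nonexpansive `F : C × C → C` on a nonempty bounded
closed convex subset of a real Hilbert space, `λ ∈ (0,1)` and the Krasnoselskij
iteration `xₙ₊₁ = λxₙ + (1−λ)F(xₙ,xₙ)` starting in `C`, one has
`xₙ − F(xₙ,xₙ) → 0` strongly. -/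
theorem krasnoselskij_asymptotic_regularity
    {H : Type*} [NormedAddCommGroup H] [InnerProductSpace ℝ H] [CompleteSpace H]
    (C : Set H) (hne : C.Nonempty) (hbdd : Bornology.IsBounded C)
    (hcl : IsClosed C) (hconv : Convex ℝ C)
    (F : H → H → H) (hmaps : ∀ x ∈ C, ∀ y ∈ C, F x y ∈ C)
    (a b : ℝ) (ha : 0 ≤ a) (hb : 0 ≤ b) (hab : a + b ≤ 1)
    (hF : ∀ x ∈ C, ∀ y ∈ C, ∀ u ∈ C, ∀ v ∈ C,
      ‖F x y - F u v‖ ≤ a * ‖x - u‖ + b * ‖y - v‖)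
    (l : ℝ) (hl0 : 0 < l) (hl1 : l < 1)
    (x : ℕ → H) (hx0 : x 0 ∈ C)
    (hrec : ∀ n, x (n + 1) = l • x n + (1 - l) • F (x n) (x n)) :
    Tendsto (fun n => x n - F (x n) (x n)) atTop (𝓝 0) := by
  have hxC := krasnoselskij_iterate_mem hconv (fun u hu => hmaps u hu u hu) hl0.le hl1.le hx0 hrec
  exact krasnoselskij_asymptotic_regularity_general (lipschitzOnWith_one_diagonal hab hF) hl0 hl1
    hxC (hbdd.subset (Set.range_subset_iff.2 hxC)) hrec
end

section
/- Let H be a real Hilbert space, C a nonempty closed, bounded and convex subset of H, and F : C × C → C a weakly nonexpansive mapping such that p ∈ C is the unique point of C satisfying F(p,p) = p. Then for every λ ∈ (0,1) and x₀ ∈ C, the sequence defined by xₙ₊₁ = (1−λ)xₙ + λF(xₙ, xₙ) converges weakly to p; that is, for every continuous linear functional f on H, f(xₙ) → f(p) as n → ∞. -/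
open Filter Topology

/-!
The diagonal map `T z = F z z` is nonexpansive on `C`, and it maps each set
`C ∩ closedBall p r` to itself, so the iterates stay in a bounded closed convex set `K`, which is
weakly compact because Hilbert spaces are reflexive. The parallelogram-type identity for
`‖(1 - l) u + l v‖²` gives `‖xₙ₊₁ - p‖² + l (1 - l) ‖xₙ - T xₙ‖² ≤ ‖xₙ - p‖²`, hence
`xₙ - T xₙ → 0`. By the demiclosedness principle every weak cluster point of `(xₙ)` is then a fixed
point of `T`, that is, `p`; a sequence in a compact set with only one cluster point converges to it.
-/

open Function Metric Set NormedSpace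
open scoped InnerProductSpace

section WeakTopology

theorem tendsto_apply_of_tendsto_toWeakSpace {𝕜 E ι : Type*} [CommSemiring 𝕜]
    [TopologicalSpace 𝕜] [ContinuousAdd 𝕜] [ContinuousConstSMul 𝕜 𝕜] [AddCommMonoid E] [Module 𝕜 E]
    [TopologicalSpace E] {u : Filter ι} {x : ι → E} {q : E}
    (h : Tendsto (fun i => toWeakSpace 𝕜 E (x i)) u (𝓝 (toWeakSpace 𝕜 E q)))
    (f : StrongDual 𝕜 E) : Tendsto (fun i => f (x i)) u (𝓝 (f q)) :=
  ((WeakBilin.eval_continuous (topDualPairing 𝕜 E).flip f).tendsto _).comp h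

theorem isCompact_image_toWeakSpace_of_surjective_inclusionInDoubleDual {𝕜 E : Type*} [RCLike 𝕜]
    [NormedAddCommGroup E] [NormedSpace 𝕜 E] [NormedSpace ℝ E] [IsScalarTower ℝ 𝕜 E]
    (hE : Surjective (inclusionInDoubleDual 𝕜 E)) {K : Set E} (hconv : Convex ℝ K)
    (hcl : IsClosed K) (hbdd : Bornology.IsBounded K) : IsCompact (toWeakSpace 𝕜 E '' K) := by
  have hclosure : closure (toWeakSpace 𝕜 E '' K) = toWeakSpace 𝕜 E '' K := by
    rw [← hconv.toWeakSpace_closure 𝕜, hcl.closure_eq]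
  have hsurj : Surjective (inclusionInDoubleDualWeak 𝕜 E) := hE
  rw [← hclosure]
  refine isCompact_closure_of_isBounded 𝕜 E _ ?_ (hsurj.range_eq ▸ subset_univ _)
  rwa [preimage_image_eq _ (toWeakSpace 𝕜 E).injective]

theorem surjective_inclusionInDoubleDual_of_innerProductSpace (𝕜 H : Type*) [RCLike 𝕜]
    [NormedAddCommGroup H] [InnerProductSpace 𝕜 H] [CompleteSpace H] :
    Surjective (inclusionInDoubleDual 𝕜 H) := by
  intro φ
  let riesz := InnerProductSpace.toDual 𝕜 H
  let ψ : StrongDual 𝕜 H :=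
    (starL 𝕜 : 𝕜 ≃L⋆[𝕜] 𝕜).toContinuousLinearMap.comp
      (φ.comp riesz.toContinuousLinearEquiv.toContinuousLinearMap)
  refine ⟨riesz.symm ψ, ContinuousLinearMap.ext fun f => ?_⟩
  obtain ⟨y, rfl⟩ := riesz.surjective f
  calc riesz y (riesz.symm ψ) = starRingEnd 𝕜 ⟪riesz.symm ψ, y⟫_𝕜 := (inner_conj_symm _ _).symm
    _ = starRingEnd 𝕜 (starRingEnd 𝕜 (φ (riesz y))) :=
      congrArg _ InnerProductSpace.toDual_symm_apply
    _ = φ (riesz y) := RCLike.conj_conj _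

end WeakTopology

theorem tendsto_zero_of_succ_add_le {u v : ℕ → ℝ} (hu : ∀ n, 0 ≤ u n) (hv : ∀ n, 0 ≤ v n)
    (huv : ∀ n, u (n + 1) + v n ≤ u n) : Tendsto v atTop (𝓝 0) := by
  have hanti : Antitone u := antitone_nat_of_succ_le fun n => by linarith [hv n, huv n]
  have hlim := tendsto_atTop_ciInf hanti ⟨0, forall_mem_range.2 hu⟩
  have hdiff : Tendsto (fun n => u n - u (n + 1)) atTop (𝓝 0) := by
    simpa using hlim.sub (hlim.comp (tendsto_add_atTop_nat 1))
  exact squeeze_zero hv (fun n => by linarith [huv n]) hdiff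

theorem mapsTo_inter_closedBall_of_isFixedPt {X : Type*} [PseudoMetricSpace X] {C : Set X}
    {T : X → X} (hmaps : MapsTo T C C) (hT : LipschitzOnWith 1 T C) {p : X} (hp : p ∈ C)
    (hfix : IsFixedPt T p) (r : ℝ) : MapsTo T (C ∩ closedBall p r) (C ∩ closedBall p r) := by
  rintro z ⟨hzC, hzr⟩
  refine ⟨hmaps hzC, ?_⟩
  calc dist (T z) p = dist (T z) (T p) := by rw [hfix.eq]
    _ ≤ dist z p := by simpa using hT.dist_le_mul z hzC p hp
    _ ≤ r := hzr

theorem lipschitzOnWith_one_diag {X : Type*} [SeminormedAddCommGroup X] {C : Set X} {F : X → X → X}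
    {a b : ℝ} (hab : a + b ≤ 1)
    (hF : ∀ x ∈ C, ∀ y ∈ C, ∀ u ∈ C, ∀ v ∈ C, ‖F x y - F u v‖ ≤ a * ‖x - u‖ + b * ‖y - v‖) :
    LipschitzOnWith 1 (fun z => F z z) C := by
  refine LipschitzOnWith.of_dist_le_mul fun x hx u hu => ?_
  simp only [dist_eq_norm, NNReal.coe_one, one_mul]
  calc ‖F x x - F u u‖ ≤ a * ‖x - u‖ + b * ‖x - u‖ := hF x hx x hx u hu u hu
    _ = (a + b) * ‖x - u‖ := by ring
    _ ≤ ‖x - u‖ := mul_le_of_le_one_left (norm_nonneg _) hab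

/-- The Krasnoselskij average `z ↦ (1 - l) z + l T z` of the identity and `T`, whose orbits are the
Krasnoselskij iterations of `T` with parameter `l`. -/
def krasnoselskijMap {E : Type*} [AddCommGroup E] [Module ℝ E] (T : E → E) (l : ℝ) (z : E) : E :=
  (1 - l) • z + l • T z

theorem mapsTo_krasnoselskijMap {E : Type*} [AddCommGroup E] [Module ℝ E] {K : Set E} {T : E → E}
    {l : ℝ} (hconv : Convex ℝ K) (hmaps : MapsTo T K K) (hl₀ : 0 ≤ l) (hl₁ : l ≤ 1) :
    MapsTo (krasnoselskijMap T l) K K := fun _ hz =>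
  hconv hz (hmaps hz) (sub_nonneg.2 hl₁) hl₀ (sub_add_cancel _ _)

section InnerProductSpace

variable {H : Type*} [NormedAddCommGroup H] [InnerProductSpace ℝ H]

theorem norm_one_sub_smul_add_smul_sq (l : ℝ) (u v : H) :
    ‖(1 - l) • u + l • v‖ ^ 2 =
      (1 - l) * ‖u‖ ^ 2 + l * ‖v‖ ^ 2 - l * (1 - l) * ‖u - v‖ ^ 2 := by
  simp only [← real_inner_self_eq_norm_sq, inner_add_left, inner_add_right, inner_sub_left,
    inner_sub_right, real_inner_smul_left, real_inner_smul_right, real_inner_comm u v]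
  ring

theorem norm_krasnoselskijMap_sub_sq_add_le {T : H → H} {l : ℝ} (hl : 0 ≤ l) {z p : H}
    (hz : ‖T z - p‖ ≤ ‖z - p‖) :
    ‖krasnoselskijMap T l z - p‖ ^ 2 + l * (1 - l) * ‖z - T z‖ ^ 2 ≤ ‖z - p‖ ^ 2 := by
  have hsub : krasnoselskijMap T l z - p = (1 - l) • (z - p) + l • (T z - p) := by
    unfold krasnoselskijMap
    module
  calc ‖krasnoselskijMap T l z - p‖ ^ 2 + l * (1 - l) * ‖z - T z‖ ^ 2
      = (1 - l) * ‖z - p‖ ^ 2 + l * ‖T z - p‖ ^ 2 := by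
        rw [hsub, norm_one_sub_smul_add_smul_sq, sub_sub_sub_cancel_right, sub_add_cancel]
    _ ≤ (1 - l) * ‖z - p‖ ^ 2 + l * ‖z - p‖ ^ 2 := by gcongr
    _ = ‖z - p‖ ^ 2 := by ring

theorem tendsto_sub_map_of_krasnoselskijMap {T : H → H} {l : ℝ} (hl₀ : 0 < l) (hl₁ : l < 1) {p : H}
    {x : ℕ → H} (hx : ∀ n, x (n + 1) = krasnoselskijMap T l (x n))
    (hp : ∀ n, ‖T (x n) - p‖ ≤ ‖x n - p‖) :
    Tendsto (fun n => x n - T (x n)) atTop (𝓝 0) := by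
  have hl : 0 < l * (1 - l) := mul_pos hl₀ (sub_pos.2 hl₁)
  have hscaled : Tendsto (fun n => l * (1 - l) * ‖x n - T (x n)‖ ^ 2) atTop (𝓝 0) :=
    tendsto_zero_of_succ_add_le (u := fun n => ‖x n - p‖ ^ 2) (fun n => by positivity)
      (fun n => by positivity)
      fun n => by simpa only [hx n] using norm_krasnoselskijMap_sub_sq_add_le hl₀.le (hp n)
  have hsq : Tendsto (fun n => ‖x n - T (x n)‖ ^ 2) atTop (𝓝 0) := by
    simpa only [inv_mul_cancel_left₀ hl.ne', mul_zero] using hscaled.const_mul (l * (1 - l))⁻¹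
  exact tendsto_zero_iff_norm_tendsto_zero.2 (by simpa [Real.sqrt_sq] using hsq.sqrt)

theorem norm_sub_map_sq_le {T : H → H} {z q : H} (hT : ‖T z - T q‖ ≤ ‖z - q‖) :
    ‖q - T q‖ ^ 2 ≤
      ‖z - T z‖ ^ 2 + 2 * ‖z - T z‖ * ‖z - q‖ - 2 * ⟪z - q, q - T q⟫_ℝ := by
  have hexpand : ‖z - T q‖ ^ 2 = ‖z - q‖ ^ 2 + 2 * ⟪z - q, q - T q⟫_ℝ + ‖q - T q‖ ^ 2 := by
    rw [← norm_add_sq_real, sub_add_sub_cancel]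
  have htriangle : ‖z - T q‖ ≤ ‖z - T z‖ + ‖z - q‖ :=
    (norm_sub_le_norm_sub_add_norm_sub z (T z) (T q)).trans (by gcongr)
  have hsq : ‖z - T q‖ ^ 2 ≤ (‖z - T z‖ + ‖z - q‖) ^ 2 := by gcongr
  linarith [add_sq ‖z - T z‖ ‖z - q‖]

theorem isFixedPt_of_tendsto_toWeakSpace {ι : Type*} {u : Filter ι} [u.NeBot] {K : Set H}
    (hK : Bornology.IsBounded K) {T : H → H} (hT : LipschitzOnWith 1 T K) {x : ι → H}
    (hxK : ∀ᶠ i in u, x i ∈ K) {q : H} (hqK : q ∈ K)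
    (hxq : Tendsto (fun i => toWeakSpace ℝ H (x i)) u (𝓝 (toWeakSpace ℝ H q)))
    (hxT : Tendsto (fun i => x i - T (x i)) u (𝓝 0)) : IsFixedPt T q := by
  have hinner : Tendsto (fun i => ⟪x i - q, q - T q⟫_ℝ) u (𝓝 0) := by
    simpa only [innerSL_apply_apply, ← inner_sub_right, real_inner_comm (q - T q), sub_self,
      inner_zero_right] using (tendsto_apply_of_tendsto_toWeakSpace hxq
        (innerSL ℝ (q - T q))).sub_const ⟪q - T q, q⟫_ℝ
  have hbound : Tendsto (fun i => ‖x i - T (x i)‖ ^ 2 + 2 * ‖x i - T (x i)‖ * diam K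
      - 2 * ⟪x i - q, q - T q⟫_ℝ) u (𝓝 0) := by
    have hnorm := hxT.norm
    simpa using ((hnorm.pow 2).add ((hnorm.const_mul 2).mul_const (diam K))).sub
      (hinner.const_mul 2)
  have hle : ‖q - T q‖ ^ 2 ≤ 0 := by
    refine ge_of_tendsto hbound (hxK.mono fun i hi => ?_)
    have hTi : ‖T (x i) - T q‖ ≤ ‖x i - q‖ := by
      simpa [dist_eq_norm] using hT.dist_le_mul (x i) hi q hqK
    have hdiam : ‖x i - q‖ ≤ diam K := dist_eq_norm (x i) q ▸ dist_le_diam_of_mem hK hi hqK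
    exact (norm_sub_map_sq_le hTi).trans (by gcongr)
  have hzero : q - T q = 0 := by simpa using hle.antisymm (by positivity)
  exact (sub_eq_zero.1 hzero).symm

theorem krasnoselskij_weak_convergence_unique_fixed_point_general [CompleteSpace H] {C : Set H}
    (hcl : IsClosed C) (hconv : Convex ℝ C) {T : H → H} (hmaps : MapsTo T C C)
    (hT : LipschitzOnWith 1 T C) {p : H} (hp : p ∈ C) (hfix : IsFixedPt T p)
    (huniq : ∀ q ∈ C, IsFixedPt T q → q = p) {l : ℝ} (hl₀ : 0 < l) (hl₁ : l < 1) {x : ℕ → H}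
    (hx₀ : x 0 ∈ C) (hx : ∀ n, x (n + 1) = krasnoselskijMap T l (x n)) :
    Tendsto (fun n => toWeakSpace ℝ H (x n)) atTop (𝓝 (toWeakSpace ℝ H p)) := by
  set K := C ∩ closedBall p (dist (x 0) p)
  have hKconv : Convex ℝ K := hconv.inter (convex_closedBall _ _)
  have hKbdd : Bornology.IsBounded K := isBounded_closedBall.subset inter_subset_right
  have hKcompact : IsCompact (toWeakSpace ℝ H '' K) :=
    isCompact_image_toWeakSpace_of_surjective_inclusionInDoubleDual
      (surjective_inclusionInDoubleDual_of_innerProductSpace ℝ H) hKconv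
      (hcl.inter isClosed_closedBall) hKbdd
  have hKmaps : MapsTo (krasnoselskijMap T l) K K := mapsTo_krasnoselskijMap hKconv
    (mapsTo_inter_closedBall_of_isFixedPt hmaps hT hp hfix _) hl₀.le hl₁.le
  have hxK (n : ℕ) : x n ∈ K := by
    induction n with
    | zero => exact ⟨hx₀, mem_closedBall.2 le_rfl⟩
    | succ n ih => exact hx n ▸ hKmaps ih
  have hxp (n : ℕ) : ‖T (x n) - p‖ ≤ ‖x n - p‖ := by
    simpa [dist_eq_norm, hfix.eq] using hT.dist_le_mul (x n) (hxK n).1 p hp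
  have hxT := tendsto_sub_map_of_krasnoselskijMap hl₀ hl₁ hx hxp
  refine hKcompact.tendsto_nhds_of_unique_mapClusterPt
    (.of_forall fun n => mem_image_of_mem _ (hxK n)) ?_
  rintro _ ⟨q, hqK, rfl⟩ hcluster
  obtain ⟨U, hU, hxq⟩ := mapClusterPt_iff_ultrafilter.1 hcluster
  have hqfix : IsFixedPt T q := isFixedPt_of_tendsto_toWeakSpace hKbdd (hT.mono inter_subset_left)
    (.of_forall hxK) hqK hxq (hxT.mono_left hU)
  rw [huniq q hqK.1 hqfix]

end InnerProductSpace

/-- If `F : C × C → C` is weakly nonexpansive on a nonempty closed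
bounded convex subset `C` of a real Hilbert space and `p ∈ C` is the unique point of `C`
with `F(p,p) = p`, then for every `λ ∈ (0,1)` and `x₀ ∈ C`, the Krasnoselskij iteration
`xₙ₊₁ = (1−λ)xₙ + λF(xₙ,xₙ)` converges weakly to `p`. -/
theorem krasnoselskij_weak_convergence_unique_fixed_point
    {H : Type*} [NormedAddCommGroup H] [InnerProductSpace ℝ H] [CompleteSpace H]
    (C : Set H) (hne : C.Nonempty) (hcl : IsClosed C)
    (hbdd : Bornology.IsBounded C) (hconv : Convex ℝ C)
    (F : H → H → H) (hmaps : ∀ x ∈ C, ∀ y ∈ C, F x y ∈ C)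
    (a b : ℝ) (ha : 0 ≤ a) (hb : 0 ≤ b) (hab : a + b ≤ 1)
    (hF : ∀ x ∈ C, ∀ y ∈ C, ∀ u ∈ C, ∀ v ∈ C,
      ‖F x y - F u v‖ ≤ a * ‖x - u‖ + b * ‖y - v‖)
    (p : H) (hp : p ∈ C) (hfix : F p p = p)
    (huniq : ∀ q ∈ C, F q q = q → q = p) :
    ∀ l : ℝ, 0 < l → l < 1 → ∀ x : ℕ → H, x 0 ∈ C →
      (∀ n, x (n + 1) = (1 - l) • x n + l • F (x n) (x n)) →
      ∀ f : H →L[ℝ] ℝ, Tendsto (fun n => f (x n)) atTop (𝓝 (f p)) := by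
  intro l hl₀ hl₁ x hx₀ hx
  exact tendsto_apply_of_tendsto_toWeakSpace <|
    krasnoselskij_weak_convergence_unique_fixed_point_general hcl hconv
      (fun z hz => hmaps z hz z hz) (lipschitzOnWith_one_diag hab hF) hp hfix huniq hl₀ hl₁ hx₀ hx
end
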